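/- Let ρ_AB be a bipartite density matrix on ℂ²⊗ℂ^{d_B} (the measured system A is a qubit). If D_{B|A}(ρ_AB) = 0, then either ρ_AB is an incoherent-quantum state, i.e. (Δ_A⊗id)(ρ_AB) = ρ_AB, or ρ_AB is a product state, i.e. ρ_AB = ρ_A ⊗ ρ_B. -/

import Mathlib

open Matrix Kronecker BigOperators
open scoped ComplexOrder

noncomputable section

/-- The completely dephasing map `Δ`: keeps only the diagonal entries. -/
def deph {n : Type*} [DecidableEq n] (M : Matrix n n ℂ) : Matrix n n ℂ :=
  Matrix.of fun i j => if i = j then M i j else 0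

/-- A density matrix: positive semidefinite with unit trace. -/
def IsDensityMatrix {n : Type*} [Fintype n] (ρ : Matrix n n ℂ) : Prop :=
  ρ.PosSemidef ∧ ρ.trace = 1

/-- Von Neumann entropy (base 2): `S(ρ) = -∑ λ_k log₂ λ_k`. -/
def vnEntropy {n : Type*} [Fintype n] [DecidableEq n] (ρ : Matrix n n ℂ) : ℝ :=
  if h : ρ.IsHermitian then -∑ k, h.eigenvalues k * Real.logb 2 (h.eigenvalues k) else 0

/-- Partial trace over the second factor: `ρ_A = tr_B ρ_AB`. -/
def ptrB {A B : Type*} [Fintype B] (ρ : Matrix (A × B) (A × B) ℂ) : Matrix A A ℂ :=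
  Matrix.of fun a a' => ∑ b, ρ (a, b) (a', b)

/-- Partial trace over the first factor: `ρ_B = tr_A ρ_AB`. -/
def ptrA {A B : Type*} [Fintype A] (ρ : Matrix (A × B) (A × B) ℂ) : Matrix B B ℂ :=
  Matrix.of fun b b' => ∑ a, ρ (a, b) (a, b')

/-- `p_i = tr((|i⟩⟨i|⊗1) ρ_AB)`. -/
def probA {A B : Type*} [Fintype B] (ρ : Matrix (A × B) (A × B) ℂ) (i : A) : ℝ :=
  (∑ b, ρ (i, b) (i, b)).re

/-- `ρ_{B|i} = tr_A((|i⟩⟨i|⊗1) ρ_AB) / p_i`. -/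
def condB {A B : Type*} [Fintype B] (ρ : Matrix (A × B) (A × B) ℂ) (i : A) :
    Matrix B B ℂ :=
  ((probA ρ i : ℝ) : ℂ)⁻¹ • Matrix.of fun b b' => ρ (i, b) (i, b')

/-- Quantum discord based on incoherent measurement:
`D_{B|A}(ρ) = ∑ᵢ pᵢ S(ρ_{B|i}) + S(ρ_A) − S(ρ_AB)`. -/
def QDI {A B : Type*} [Fintype A] [Fintype B] [DecidableEq A] [DecidableEq B]
    (ρ : Matrix (A × B) (A × B) ℂ) : ℝ :=
  (∑ i, probA ρ i * vnEntropy (condB ρ i)) + vnEntropy (ptrB ρ) - vnEntropy ρ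

/-- Dephasing on the first subsystem: `Δ_A ⊗ id`. -/
def dephA {A B : Type*} [DecidableEq A] (ρ : Matrix (A × B) (A × B) ℂ) :
    Matrix (A × B) (A × B) ℂ :=
  Matrix.of fun p q => if p.1 = q.1 then ρ p q else 0

/-- Dephasing on the second subsystem: `id ⊗ Δ_B`. -/
def dephB {A B : Type*} [DecidableEq B] (ρ : Matrix (A × B) (A × B) ℂ) :
    Matrix (A × B) (A × B) ℂ :=
  Matrix.of fun p q => if p.2 = q.2 then ρ p q else 0

/-- Trace out the last system of a tripartite state on `A × (B × B')`, leaving `A × B`. -/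
def ptrB2 {A B B' : Type*} [Fintype B'] (ρ : Matrix (A × B × B') (A × B × B') ℂ) :
    Matrix (A × B) (A × B) ℂ :=
  Matrix.of fun p q => ∑ c, ρ (p.1, p.2, c) (q.1, q.2, c)

/-- Trace out the middle system of a tripartite state on `A × (B × B')`, leaving `A × B'`. -/
def ptrB1 {A B B' : Type*} [Fintype B] (ρ : Matrix (A × B × B') (A × B × B') ℂ) :
    Matrix (A × B') (A × B') ℂ :=
  Matrix.of fun p q => ∑ b, ρ (p.1, b, p.2) (q.1, b, q.2)

/-!
Writing `Δ` for dephasing, the discord is a difference of two relative entropies, `D_{B|A}(ρ) =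
S(ρ ‖ (Δ_A ⊗ id) ρ) - S(ρ_A ‖ Δ ρ_A)`, so `D_{B|A}(ρ) = 0` says that the partial trace over `B`
saturates the data processing inequality. The Nussbaum–Szkoła distributions turn a relative
entropy `S(ρ ‖ σ)` into a classical one, which is the integral over `t > 0` of the maximum over
`X` of the concave form `2 Re tr(ρ X) - Re tr(σ X X*) - t Re tr(ρ X* X)`, up to a renormalization
that only depends on `tr ρ`. The maximum for `ρ_A` is that for `ρ` restricted to `X = Y ⊗ 1`. In
the case of equality the maxima thus coincide for every `t`, and a maximizer for `ρ` has the form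
`Y ⊗ 1`. At `t = 1` its critical point equation `σ X + X ρ = ρ` reads `Y i j • ρ_ii + ∑ k, Y i k •
ρ_kj = ρ_ij` in terms of the blocks of `ρ`. For a qubit this makes `ρ_ji` a multiple of `ρ_ii`
whenever `i ≠ j`, so `ρ` is block diagonal or all its blocks are proportional.
-/

section ClassicalRelativeEntropy

open Filter Topology

variable {ι ι' : Type*} {P Q : ι → ℝ} {P' Q' : ι' → ℝ}

/-- Absolute continuity `P ≪ Q` of nonnegative weights on a set of outcomes. -/
structure IsDominatedBy (P Q : ι → ℝ) : Prop where
  nonneg_left : ∀ i, 0 ≤ P i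
  nonneg_right : ∀ i, 0 ≤ Q i
  eq_zero_of_eq_zero : ∀ i, Q i = 0 → P i = 0

lemma IsDominatedBy.pos_of_ne_zero (h : IsDominatedBy P Q) {i : ι} (hi : P i ≠ 0) :
    0 < P i ∧ 0 < Q i :=
  ⟨(h.nonneg_left i).lt_of_ne' hi,
    (h.nonneg_right i).lt_of_ne' fun hQ => hi (h.eq_zero_of_eq_zero i hQ)⟩

variable [Fintype ι] [Fintype ι']

/-- The classical relative entropy `∑ᵢ Pᵢ log (Pᵢ / Qᵢ)`, in nats. It is meant for `P ≪ Q`, where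
the junk values `x / 0 = 0` and `log 0 = 0` give the usual convention `0 log (0 / q) = 0`. -/
def relEntropy (P Q : ι → ℝ) : ℝ :=
  ∑ i, P i * Real.log (P i / Q i)

/-- The sum `∑ᵢ Pᵢ² / (Qᵢ + t Pᵢ)`, whose integral over `t` represents the relative entropy. -/
def resolventSum (P Q : ι → ℝ) (t : ℝ) : ℝ :=
  ∑ i, P i ^ 2 / (Q i + t * P i)

/-- The primitive `∑ᵢ Pᵢ log (1 + T Pᵢ / Qᵢ)` of `resolventSum P Q` that vanishes at `T = 0`. -/
def resolventPrimitive (P Q : ι → ℝ) (T : ℝ) : ℝ :=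
  ∑ i, P i * Real.log (1 + T * (P i / Q i))

lemma resolventPrimitive_zero (P Q : ι → ℝ) : resolventPrimitive P Q 0 = 0 := by
  simp [resolventPrimitive]

lemma IsDominatedBy.hasDerivAt_resolventPrimitive (h : IsDominatedBy P Q) {T : ℝ} (hT : 0 ≤ T) :
    HasDerivAt (resolventPrimitive P Q) (resolventSum P Q T) T := by
  refine HasDerivAt.fun_sum fun i _ => ?_
  by_cases hi : P i = 0
  · simpa [hi] using hasDerivAt_const T (0 : ℝ)
  · obtain ⟨hP, hQ⟩ := h.pos_of_ne_zero hi
    have hlin : HasDerivAt (fun T : ℝ => 1 + T * (P i / Q i)) (P i / Q i) T := by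
      simpa using ((hasDerivAt_id T).mul_const (P i / Q i)).const_add 1
    have hterm : P i ^ 2 / (Q i + T * P i) = P i * (P i / Q i / (1 + T * (P i / Q i))) := by
      field_simp
    rw [hterm]
    exact (hlin.log (by positivity)).const_mul (P i)

lemma IsDominatedBy.tendsto_resolventPrimitive_sub_log (h : IsDominatedBy P Q) :
    Tendsto (fun T => resolventPrimitive P Q T - (∑ i, P i) * Real.log T) atTop
      (𝓝 (relEntropy P Q)) := by
  simp_rw [resolventPrimitive, Finset.sum_mul, ← Finset.sum_sub_distrib, ← mul_sub]
  refine tendsto_finsetSum _ fun i _ => ?_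
  by_cases hi : P i = 0
  · simp [hi]
  · obtain ⟨hP, hQ⟩ := h.pos_of_ne_zero hi
    have hlog : Tendsto (fun T : ℝ => Real.log (T⁻¹ + P i / Q i)) atTop
        (𝓝 (Real.log (P i / Q i))) := by
      have hadd := tendsto_inv_atTop_zero.add_const (P i / Q i)
      rw [zero_add] at hadd
      exact hadd.log (by positivity)
    refine (hlog.congr' ?_).const_mul (P i)
    filter_upwards [eventually_gt_atTop 0] with T hT
    rw [← Real.log_div (by positivity) hT.ne']
    congr 1
    field_simp

theorem resolventSum_eq_of_le_of_relEntropy_eq (h : IsDominatedBy P Q) (h' : IsDominatedBy P' Q')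
    (hle : ∀ t, 0 < t → resolventSum P' Q' t ≤ resolventSum P Q t)
    (hsum : ∑ i, P i = ∑ i, P' i) (hrel : relEntropy P Q = relEntropy P' Q') {t : ℝ}
    (ht : 0 < t) : resolventSum P Q t = resolventSum P' Q' t := by
  let G : ℝ → ℝ := fun T => resolventPrimitive P Q T - resolventPrimitive P' Q' T
  have hderiv : ∀ T, 0 ≤ T → HasDerivAt G (resolventSum P Q T - resolventSum P' Q' T) T :=
    fun T hT => (h.hasDerivAt_resolventPrimitive hT).sub (h'.hasDerivAt_resolventPrimitive hT)
  have hmono : MonotoneOn G (Set.Ici 0) := by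
    refine monotoneOn_of_hasDerivWithinAt_nonneg
      (f' := fun T => resolventSum P Q T - resolventSum P' Q' T) (convex_Ici 0)
      (fun T hT => (hderiv T hT).continuousAt.continuousWithinAt) ?_ ?_
    all_goals rw [interior_Ici]
    · exact fun T hT => (hderiv T (Set.mem_Ioi.1 hT).le).hasDerivWithinAt
    · exact fun T hT => sub_nonneg.2 (hle T hT)
  have hlim : Tendsto G atTop (𝓝 0) := by
    have hdiff := h.tendsto_resolventPrimitive_sub_log.sub h'.tendsto_resolventPrimitive_sub_log
    simpa only [hsum, hrel, sub_self, sub_sub_sub_cancel_right] using hdiff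
  have hzero : ∀ T, 0 ≤ T → G T = 0 := by
    refine fun T hT => le_antisymm (ge_of_tendsto hlim ?_) ?_
    · filter_upwards [eventually_ge_atTop T] with S hS
      exact hmono hT (hT.trans hS) hS
    · simpa only [G, resolventPrimitive_zero, sub_self] using hmono Set.self_mem_Ici hT hT
  have hconst : HasDerivAt G 0 t := by
    refine (hasDerivAt_const t (0 : ℝ)).congr_of_eventuallyEq ?_
    filter_upwards [Ioi_mem_nhds ht] with T hT
    exact hzero T (Set.mem_Ioi.1 hT).le
  exact sub_eq_zero.1 ((hderiv t ht.le).unique hconst)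

end ClassicalRelativeEntropy

section SpectralMatrix

variable {n : Type*} [Fintype n] [DecidableEq n]

/-- The Hermitian matrix `U diag(d) U*` with eigenvalues `d` and eigenvectors the columns of `U`. -/
def spectralMatrix (U : unitaryGroup n ℂ) (d : n → ℝ) : Matrix n n ℂ :=
  U * diagonal (fun i => (d i : ℂ)) * star (U : Matrix n n ℂ)

lemma unitary_star_mul_cancel_left {m : Type*} (U : unitaryGroup n ℂ) (M : Matrix n m ℂ) :
    star (U : Matrix n n ℂ) * ((U : Matrix n n ℂ) * M) = M := by
  rw [← Matrix.mul_assoc, UnitaryGroup.star_mul_self, Matrix.one_mul]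

lemma isHermitian_spectralMatrix (U : unitaryGroup n ℂ) (d : n → ℝ) :
    (spectralMatrix U d).IsHermitian :=
  isHermitian_mul_mul_conjTranspose _ (isHermitian_diagonal_of_self_adjoint _ (by ext; simp))

lemma eq_spectralMatrix_eigenvalues {M : Matrix n n ℂ} (hM : M.IsHermitian) :
    M = spectralMatrix hM.eigenvectorUnitary hM.eigenvalues := by
  conv_lhs => rw [hM.spectral_theorem, Unitary.conjStarAlgAut_apply]
  rfl

lemma star_mul_spectralMatrix_mul (U V : unitaryGroup n ℂ) (d : n → ℝ) :
    star (V : Matrix n n ℂ) * spectralMatrix U d * (V : Matrix n n ℂ) =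
      spectralMatrix (star V * U) d := by
  simp [spectralMatrix, Matrix.mul_assoc]

lemma spectralMatrix_apply_self (U : unitaryGroup n ℂ) (d : n → ℝ) (k : n) :
    spectralMatrix U d k k = ((∑ j, Complex.normSq (U k j) * d j : ℝ) : ℂ) := by
  rw [spectralMatrix, Matrix.mul_apply, Complex.ofReal_sum]
  refine Finset.sum_congr rfl fun j _ => ?_
  rw [mul_diagonal, star_apply, RCLike.star_def, Complex.ofReal_mul, ← Complex.mul_conj]
  ring

lemma smul_spectralMatrix (p : ℝ) (U : unitaryGroup n ℂ) (d : n → ℝ) :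
    p • spectralMatrix U d = spectralMatrix U fun i => p * d i := by
  have hdiag : diagonal (fun i => ((p * d i : ℝ) : ℂ)) = p • diagonal fun i => (d i : ℂ) := by
    simp [← diagonal_smul, Pi.smul_def]
  rw [spectralMatrix, spectralMatrix, hdiag, Matrix.mul_smul, Matrix.smul_mul]

lemma trace_spectralMatrix (U : unitaryGroup n ℂ) (d : n → ℝ) :
    (spectralMatrix U d).trace = ((∑ i, d i : ℝ) : ℂ) := by
  simp [spectralMatrix, trace_mul_comm (_ * _), ← Matrix.mul_assoc, trace_diagonal]

lemma roots_charpoly_spectralMatrix (U : unitaryGroup n ℂ) (d : n → ℝ) :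
    (spectralMatrix U d).charpoly.roots = Finset.univ.val.map fun i => (d i : ℂ) := by
  rw [spectralMatrix, charpoly_mul_comm, ← Matrix.mul_assoc, UnitaryGroup.star_mul_self,
    Matrix.one_mul, charpoly_diagonal, Polynomial.roots_prod]
  · simp
  · simp [Finset.prod_ne_zero_iff, Polynomial.X_sub_C_ne_zero]

lemma vnEntropy_spectralMatrix (U : unitaryGroup n ℂ) (d : n → ℝ) :
    vnEntropy (spectralMatrix U d) * Real.log 2 = ∑ i, Real.negMulLog (d i) := by
  have hM := isHermitian_spectralMatrix U d
  have hroots : Finset.univ.val.map hM.eigenvalues = Finset.univ.val.map d := by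
    apply Multiset.map_injective Complex.ofReal_injective
    rw [Multiset.map_map, Multiset.map_map]
    exact hM.roots_charpoly_eq_eigenvalues.symm.trans (roots_charpoly_spectralMatrix U d)
  have hsum : ∑ i, Real.negMulLog (hM.eigenvalues i) = ∑ i, Real.negMulLog (d i) := by
    simpa only [Multiset.map_map, Finset.sum_eq_multiset_sum, Function.comp_def] using
      congrArg (fun m => (m.map Real.negMulLog).sum) hroots
  have hlog : Real.log 2 ≠ 0 := (Real.log_pos one_lt_two).ne'
  rw [← hsum, vnEntropy, dif_pos hM, neg_mul, Finset.sum_mul, ← Finset.sum_neg_distrib]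
  refine Finset.sum_congr rfl fun i _ => ?_
  rw [Real.logb, Real.negMulLog]
  field_simp

lemma vnEntropy_diagonal (d : n → ℝ) :
    vnEntropy (diagonal fun i => (d i : ℂ)) * Real.log 2 = ∑ i, Real.negMulLog (d i) := by
  rw [← vnEntropy_spectralMatrix 1]
  simp [spectralMatrix]

lemma vnEntropy_smul {M : Matrix n n ℂ} (hM : M.IsHermitian) (p : ℝ) :
    vnEntropy (p • M) * Real.log 2 =
      p * (vnEntropy M * Real.log 2) + Real.negMulLog p * M.trace.re := by
  rw [eq_spectralMatrix_eigenvalues hM, smul_spectralMatrix, vnEntropy_spectralMatrix,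
    vnEntropy_spectralMatrix, trace_spectralMatrix, Complex.ofReal_re]
  simp_rw [Real.negMulLog_mul, Finset.sum_add_distrib, Finset.mul_sum, mul_comm (hM.eigenvalues _)]
  exact add_comm _ _

end SpectralMatrix

section NussbaumSzkola

variable {n : Type*} [Fintype n] [DecidableEq n]

/-- The outcome distribution `k ↦ ∑ⱼ |W k j|² r j` of a measurement whose basis vectors have
overlaps `W` with the eigenvectors of a state with spectrum `r`. -/
def measuredSpectrum (W : unitaryGroup n ℂ) (r : n → ℝ) (k : n) : ℝ :=
  ∑ j, Complex.normSq (W k j) * r j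

/-- The Nussbaum–Szkoła distribution `(k, j) ↦ |W k j|² r j` of a state with spectrum `r`. -/
def nussbaumSzkolaFst (W : unitaryGroup n ℂ) (r : n → ℝ) (x : n × n) : ℝ :=
  Complex.normSq (W x.1 x.2) * r x.2

/-- The Nussbaum–Szkoła distribution `(k, j) ↦ |W k j|² s k` of a state with spectrum `s`, which
for the present purpose is the result of measuring the state with spectrum `r`. -/
def nussbaumSzkolaSnd (W : unitaryGroup n ℂ) (r : n → ℝ) (x : n × n) : ℝ :=
  Complex.normSq (W x.1 x.2) * measuredSpectrum W r x.1

lemma measuredSpectrum_nonneg (W : unitaryGroup n ℂ) {r : n → ℝ} (hr : ∀ j, 0 ≤ r j) (k : n) :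
    0 ≤ measuredSpectrum W r k :=
  Finset.sum_nonneg fun j _ => mul_nonneg (Complex.normSq_nonneg _) (hr j)

lemma sum_normSq_unitary_apply (W : unitaryGroup n ℂ) (j : n) :
    ∑ k, Complex.normSq (W k j) = 1 := by
  have hentry : (star (W : Matrix n n ℂ) * W) j j = 1 := by
    rw [UnitaryGroup.star_mul_self, one_apply_eq]
  rw [← Complex.ofReal_inj, Complex.ofReal_one, ← hentry, Matrix.mul_apply, Complex.ofReal_sum]
  exact Finset.sum_congr rfl fun k _ => Complex.normSq_eq_conj_mul_self

lemma sum_nussbaumSzkolaFst (W : unitaryGroup n ℂ) (r : n → ℝ) :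
    ∑ x, nussbaumSzkolaFst W r x = ∑ j, r j := by
  simp_rw [nussbaumSzkolaFst, Fintype.sum_prod_type_right, ← Finset.sum_mul,
    sum_normSq_unitary_apply, one_mul]

lemma isDominatedBy_nussbaumSzkola (W : unitaryGroup n ℂ) {r : n → ℝ} (hr : ∀ j, 0 ≤ r j) :
    IsDominatedBy (nussbaumSzkolaFst W r) (nussbaumSzkolaSnd W r) where
  nonneg_left x := mul_nonneg (Complex.normSq_nonneg _) (hr _)
  nonneg_right x := mul_nonneg (Complex.normSq_nonneg _) (measuredSpectrum_nonneg W hr _)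
  eq_zero_of_eq_zero x hx := by
    rcases mul_eq_zero.1 hx with hW | hs
    · simp [nussbaumSzkolaFst, hW]
    · exact (Finset.sum_eq_zero_iff_of_nonneg fun j _ =>
        mul_nonneg (Complex.normSq_nonneg _) (hr j)).1 hs x.2 (Finset.mem_univ _)

lemma relEntropy_nussbaumSzkola (W : unitaryGroup n ℂ) {r : n → ℝ} (hr : ∀ j, 0 ≤ r j) :
    relEntropy (nussbaumSzkolaFst W r) (nussbaumSzkolaSnd W r) =
      ∑ k, Real.negMulLog (measuredSpectrum W r k) - ∑ j, Real.negMulLog (r j) := by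
  have hterm : ∀ x, nussbaumSzkolaFst W r x *
      Real.log (nussbaumSzkolaFst W r x / nussbaumSzkolaSnd W r x) =
      Complex.normSq (W x.1 x.2) * r x.2 * (-Real.log (measuredSpectrum W r x.1)) -
        Complex.normSq (W x.1 x.2) * Real.negMulLog (r x.2) := by
    intro x
    by_cases hx : nussbaumSzkolaFst W r x = 0
    · rcases mul_eq_zero.1 hx with h | h <;> simp [nussbaumSzkolaFst, h]
    · have hs := ((isDominatedBy_nussbaumSzkola W hr).pos_of_ne_zero hx).2.ne'
      obtain ⟨hW, hrx⟩ := mul_ne_zero_iff.1 hx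
      rw [nussbaumSzkolaSnd] at hs ⊢
      rw [nussbaumSzkolaFst, mul_div_mul_left _ _ hW,
        Real.log_div hrx (right_ne_zero_of_mul hs), Real.negMulLog]
      ring
  simp_rw [relEntropy, hterm, Finset.sum_sub_distrib]
  congr 1
  · simp_rw [Fintype.sum_prod_type, ← Finset.sum_mul, Real.negMulLog, neg_mul, mul_neg]
    rfl
  · simp_rw [Fintype.sum_prod_type_right, ← Finset.sum_mul, sum_normSq_unitary_apply, one_mul]

lemma resolventSum_nussbaumSzkola (W : unitaryGroup n ℂ) (r : n → ℝ) (t : ℝ) :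
    resolventSum (nussbaumSzkolaFst W r) (nussbaumSzkolaSnd W r) t =
      ∑ j, ∑ k, Complex.normSq (W k j) * (r j ^ 2 / (measuredSpectrum W r k + t * r j)) := by
  rw [resolventSum, Fintype.sum_prod_type_right]
  refine Finset.sum_congr rfl fun j _ => Finset.sum_congr rfl fun k _ => ?_
  simp only [nussbaumSzkolaFst, nussbaumSzkolaSnd]
  rcases eq_or_ne (Complex.normSq (W k j)) 0 with hW | hW
  · simp [hW]
  · rw [← mul_div_assoc, ← mul_div_mul_left _ (measuredSpectrum W r k + t * r j) hW]
    congr 1 <;> ring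

end NussbaumSzkola

section SylvesterEquation

variable {n : Type*} [Fintype n]

/-- `X` solves `σ X + t X ρ = ρ`, that is, `X = (L_σ + t R_ρ)⁻¹ ρ` for the operators of left
multiplication by `σ` and right multiplication by `ρ`. -/
def IsSylvesterSolution (ρ σ : Matrix n n ℂ) (t : ℝ) (X : Matrix n n ℂ) : Prop :=
  σ * X + t • (X * ρ) = ρ

/-- The concave quadratic form `2 Re tr(ρ X) - Re tr(σ X X*) - t Re tr(ρ X* X)`, whose critical
points are the solutions of `σ X + t X ρ = ρ`. -/
def sylvesterForm (ρ σ : Matrix n n ℂ) (t : ℝ) (X : Matrix n n ℂ) : ℝ :=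
  2 * (ρ * X).trace.re - (σ * (X * Xᴴ)).trace.re - t * (ρ * (Xᴴ * X)).trace.re

variable {m : Type*}

open scoped MatrixOrder in
lemma mul_eq_zero_of_conjTranspose_mul_mul_eq_zero {M : Matrix n n ℂ} (hM : M.PosSemidef)
    {H : Matrix n m ℂ} (h : Hᴴ * M * H = 0) : M * H = 0 := by
  classical
  obtain ⟨C, rfl⟩ := CStarAlgebra.nonneg_iff_eq_star_mul_self.1 hM.nonneg
  have hCH : (C * H)ᴴ * (C * H) = 0 := by
    rwa [conjTranspose_mul, Matrix.mul_assoc, ← Matrix.mul_assoc Cᴴ, ← Matrix.mul_assoc]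
  rw [Matrix.mul_assoc, conjTranspose_mul_self_eq_zero.1 hCH, Matrix.mul_zero]

lemma trace_conjTranspose_re (M : Matrix n n ℂ) : Mᴴ.trace.re = M.trace.re := by
  rw [trace_conjTranspose, RCLike.star_def, Complex.conj_re]

lemma mul_eq_zero_of_trace_conjTranspose_mul_mul_re_eq_zero [Fintype m] {M : Matrix n n ℂ}
    (hM : M.PosSemidef) {H : Matrix n m ℂ} (h : (Hᴴ * M * H).trace.re = 0) : M * H = 0 := by
  have hpos := hM.conjTranspose_mul_mul_same H
  refine mul_eq_zero_of_conjTranspose_mul_mul_eq_zero hM (hpos.trace_eq_zero_iff.1 ?_)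
  exact Complex.ext h (Complex.le_def.1 hpos.trace_nonneg).2.symm

variable {ρ σ X Y Z : Matrix n n ℂ} {t : ℝ}

lemma IsSylvesterSolution.trace_re (h : IsSylvesterSolution ρ σ t X) (hρ : ρ.IsHermitian)
    (Z : Matrix n n ℂ) :
    (σ * (X * Zᴴ)).trace.re + t * (ρ * (Zᴴ * X)).trace.re = (ρ * Z).trace.re := by
  have hZ : (ρ * Zᴴ).trace.re = (ρ * Z).trace.re := by
    rw [← trace_conjTranspose_re, conjTranspose_mul, conjTranspose_conjTranspose, hρ.eq,
      trace_mul_comm]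
  have htr := congrArg (fun M => (M * Zᴴ).trace.re) h
  simp only [Matrix.add_mul, Matrix.smul_mul, trace_add, trace_smul, Complex.add_re,
    Complex.smul_re, smul_eq_mul, Matrix.mul_assoc] at htr
  rw [← hZ, ← htr, trace_mul_comm X, Matrix.mul_assoc]

lemma IsSylvesterSolution.sylvesterForm_eq (h : IsSylvesterSolution ρ σ t X)
    (hρ : ρ.IsHermitian) : sylvesterForm ρ σ t X = (ρ * X).trace.re := by
  rw [sylvesterForm]
  linarith [h.trace_re hρ X]

lemma IsSylvesterSolution.sylvesterForm_add (h : IsSylvesterSolution ρ σ t X)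
    (hρ : ρ.IsHermitian) (hσ : σ.IsHermitian) (H : Matrix n n ℂ) :
    sylvesterForm ρ σ t (X + H) =
      sylvesterForm ρ σ t X - ((Hᴴ * σ * H).trace.re + t * (H * ρ * Hᴴ).trace.re) := by
  have hσ_symm : (σ * (H * Xᴴ)).trace.re = (σ * (X * Hᴴ)).trace.re := by
    rw [← trace_conjTranspose_re]
    simp only [conjTranspose_mul, conjTranspose_conjTranspose, hσ.eq]
    rw [trace_mul_comm]
  have hρ_symm : (ρ * (Xᴴ * H)).trace.re = (ρ * (Hᴴ * X)).trace.re := by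
    rw [← trace_conjTranspose_re]
    simp only [conjTranspose_mul, conjTranspose_conjTranspose, hρ.eq]
    rw [trace_mul_comm]
  have hσ_cycle : (Hᴴ * σ * H).trace = (σ * (H * Hᴴ)).trace := by
    rw [Matrix.mul_assoc, trace_mul_comm, Matrix.mul_assoc]
  have hρ_cycle : (H * ρ * Hᴴ).trace = (ρ * (Hᴴ * H)).trace := by
    rw [Matrix.mul_assoc, trace_mul_comm, Matrix.mul_assoc]
  simp only [sylvesterForm, conjTranspose_add, Matrix.mul_add, Matrix.add_mul, trace_add,
    Complex.add_re, hσ_symm, hρ_symm, hσ_cycle, hρ_cycle]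
  linarith [h.trace_re hρ H]

lemma IsSylvesterSolution.sylvesterForm_le (h : IsSylvesterSolution ρ σ t X)
    (hρ : ρ.PosSemidef) (hσ : σ.PosSemidef) (ht : 0 ≤ t) (Y : Matrix n n ℂ) :
    sylvesterForm ρ σ t Y ≤ sylvesterForm ρ σ t X := by
  have hadd := h.sylvesterForm_add hρ.1 hσ.1 (Y - X)
  have hσY : 0 ≤ ((Y - X)ᴴ * σ * (Y - X)).trace.re :=
    (Complex.le_def.1 (hσ.conjTranspose_mul_mul_same (Y - X)).trace_nonneg).1
  have hρY : 0 ≤ ((Y - X) * ρ * (Y - X)ᴴ).trace.re :=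
    (Complex.le_def.1 (hρ.mul_mul_conjTranspose_same (Y - X)).trace_nonneg).1
  rw [add_sub_cancel] at hadd
  rw [hadd]
  exact sub_le_self _ (add_nonneg hσY (mul_nonneg ht hρY))

lemma IsSylvesterSolution.of_sylvesterForm_eq (h : IsSylvesterSolution ρ σ t X)
    (hρ : ρ.PosSemidef) (hσ : σ.PosSemidef) (ht : 0 < t)
    (hY : sylvesterForm ρ σ t Y = sylvesterForm ρ σ t X) : IsSylvesterSolution ρ σ t Y := by
  obtain ⟨H, rfl⟩ : ∃ H, Y = X + H := ⟨Y - X, (add_sub_cancel X Y).symm⟩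
  have hadd := h.sylvesterForm_add hρ.1 hσ.1 H
  have hσH : 0 ≤ (Hᴴ * σ * H).trace.re :=
    (Complex.le_def.1 (hσ.conjTranspose_mul_mul_same H).trace_nonneg).1
  have hρH : 0 ≤ t * (H * ρ * Hᴴ).trace.re :=
    mul_nonneg ht.le (Complex.le_def.1 (hρ.mul_mul_conjTranspose_same H).trace_nonneg).1
  obtain ⟨hσ0, hρ0⟩ := (add_eq_zero_iff_of_nonneg hσH hρH).1 (by linarith)
  have hleft : σ * H = 0 := mul_eq_zero_of_trace_conjTranspose_mul_mul_re_eq_zero hσ hσ0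
  have hright : H * ρ = 0 := by
    rw [← conjTranspose_eq_zero, conjTranspose_mul, hρ.1.eq]
    apply mul_eq_zero_of_trace_conjTranspose_mul_mul_re_eq_zero hρ
    rw [conjTranspose_conjTranspose]
    exact (mul_eq_zero.1 hρ0).resolve_left ht.ne'
  rw [IsSylvesterSolution, Matrix.mul_add, Matrix.add_mul, hleft, hright, add_zero, add_zero]
  exact h

variable [DecidableEq n]

/-- The solution of `σ X + t X ρ = ρ` for `ρ = U diag(r) U*` and `σ = V diag(s) V*`. A zero
denominator `s k + t * r j` forces `r j = 0`, so the junk value of the quotient is harmless. -/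
def sylvesterSolution (U V : unitaryGroup n ℂ) (r s : n → ℝ) (t : ℝ) : Matrix n n ℂ :=
  V * of (fun k j => ((r j / (s k + t * r j) : ℝ) : ℂ) * (star V * U) k j) *
    star (U : Matrix n n ℂ)

lemma isSylvesterSolution_sylvesterSolution (U V : unitaryGroup n ℂ) {r s : n → ℝ}
    (hr : ∀ j, 0 ≤ r j) (hs : ∀ k, 0 ≤ s k) (ht : 0 < t) :
    IsSylvesterSolution (spectralMatrix U r) (spectralMatrix V s) t
      (sylvesterSolution U V r s t) := by
  set X : Matrix n n ℂ := of fun k j => ((r j / (s k + t * r j) : ℝ) : ℂ) * (star V * U) k j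
    with hX
  set R : Matrix n n ℂ := diagonal fun j => (r j : ℂ) with hR
  set S : Matrix n n ℂ := diagonal fun k => (s k : ℂ) with hS
  have hcoord : S * X + t • (X * R) = star (V : Matrix n n ℂ) * U * R := by
    ext k j
    have hquot : (s k + t * r j) * (r j / (s k + t * r j)) = r j := by
      refine mul_div_cancel_of_imp' fun h0 => ?_
      have := (add_eq_zero_iff_of_nonneg (hs k) (mul_nonneg ht.le (hr j))).1 h0
      exact (mul_eq_zero.1 this.2).resolve_left ht.ne'
    have hquot' := congrArg (fun x : ℝ => (x : ℂ) * (star V * U) k j) hquot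
    simp only [Complex.ofReal_mul, Complex.ofReal_add] at hquot'
    simp only [hX, hR, hS, Matrix.add_apply, Matrix.smul_apply, diagonal_mul, mul_diagonal,
      of_apply, Complex.real_smul, ← Unitary.coe_star, ← Submonoid.coe_mul]
    linear_combination hquot'
  calc V * S * star (V : Matrix n n ℂ) * (V * X * star (U : Matrix n n ℂ)) +
        t • (V * X * star (U : Matrix n n ℂ) * (U * R * star (U : Matrix n n ℂ)))
      = V * (S * X + t • (X * R)) * star (U : Matrix n n ℂ) := by
        simp only [Matrix.mul_add, Matrix.add_mul, Matrix.mul_smul, Matrix.smul_mul,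
          Matrix.mul_assoc, unitary_star_mul_cancel_left]
    _ = U * R * star (U : Matrix n n ℂ) := by
        rw [hcoord]
        simp [← Matrix.mul_assoc]

lemma trace_spectralMatrix_mul_sylvesterSolution (U V : unitaryGroup n ℂ) (r s : n → ℝ) (t : ℝ) :
    (spectralMatrix U r * sylvesterSolution U V r s t).trace =
      ((∑ j, ∑ k, Complex.normSq ((star V * U) k j) * (r j ^ 2 / (s k + t * r j)) : ℝ) : ℂ) := by
  set X : Matrix n n ℂ := of fun k j => ((r j / (s k + t * r j) : ℝ) : ℂ) * (star V * U) k j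
    with hX
  have hcycle : (spectralMatrix U r * sylvesterSolution U V r s t).trace =
      (diagonal (fun j => (r j : ℂ)) *
        (star ((star V * U : unitaryGroup n ℂ) : Matrix n n ℂ) * X)).trace := by
    rw [spectralMatrix, sylvesterSolution, ← Matrix.mul_assoc, trace_mul_comm]
    simp only [hX, Matrix.mul_assoc, unitary_star_mul_cancel_left, Submonoid.coe_mul,
      Unitary.coe_star, star_mul, star_star]
  rw [hcycle, trace, Complex.ofReal_sum]
  refine Finset.sum_congr rfl fun j _ => ?_
  rw [diag_apply, diagonal_mul, Matrix.mul_apply, Finset.mul_sum, Complex.ofReal_sum]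
  refine Finset.sum_congr rfl fun k _ => ?_
  rw [hX, of_apply, star_apply, RCLike.star_def, Complex.ofReal_mul, ← Complex.mul_conj]
  push_cast
  ring

end SylvesterEquation

section EntropyGain

variable {n m : Type*} [DecidableEq n] [DecidableEq m]

lemma deph_eq_diagonal (M : Matrix n n ℂ) : deph M = diagonal M.diag := by
  ext i j
  rcases eq_or_ne i j with rfl | hij
  · simp [deph]
  · simp [deph, hij]

variable [Fintype n] [Fintype m]

/-- The dephasing of `ρ` in the orthonormal basis formed by the columns of `V`. -/
def dephIn (V : unitaryGroup n ℂ) (ρ : Matrix n n ℂ) : Matrix n n ℂ :=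
  (V : Matrix n n ℂ) * deph (star (V : Matrix n n ℂ) * ρ * (V : Matrix n n ℂ)) *
    star (V : Matrix n n ℂ)

lemma dephIn_one (ρ : Matrix n n ℂ) : dephIn 1 ρ = deph ρ := by
  simp [dephIn]

lemma deph_spectralMatrix (W : unitaryGroup n ℂ) (r : n → ℝ) :
    deph (spectralMatrix W r) = diagonal fun k => (measuredSpectrum W r k : ℂ) :=
  (deph_eq_diagonal _).trans (congrArg diagonal (funext (spectralMatrix_apply_self W r)))

lemma dephIn_spectralMatrix (V U : unitaryGroup n ℂ) (r : n → ℝ) :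
    dephIn V (spectralMatrix U r) = spectralMatrix V (measuredSpectrum (star V * U) r) := by
  rw [dephIn, star_mul_spectralMatrix_mul, deph_spectralMatrix, spectralMatrix]

lemma posSemidef_spectralMatrix (U : unitaryGroup n ℂ) {d : n → ℝ} (hd : ∀ i, 0 ≤ d i) :
    (spectralMatrix U d).PosSemidef :=
  (posSemidef_diagonal_iff.2 fun i => Complex.zero_le_real.2 (hd i)).mul_mul_conjTranspose_same _

lemma exists_eq_spectralMatrix {ρ : Matrix n n ℂ} (hρ : ρ.PosSemidef) :
    ∃ (U : unitaryGroup n ℂ) (r : n → ℝ), (∀ j, 0 ≤ r j) ∧ ρ = spectralMatrix U r :=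
  ⟨_, _, hρ.eigenvalues_nonneg, eq_spectralMatrix_eigenvalues hρ.1⟩

lemma posSemidef_dephIn (V : unitaryGroup n ℂ) {ρ : Matrix n n ℂ} (hρ : ρ.PosSemidef) :
    (dephIn V ρ).PosSemidef := by
  obtain ⟨U, r, hr, rfl⟩ := exists_eq_spectralMatrix hρ
  rw [dephIn_spectralMatrix]
  exact posSemidef_spectralMatrix V (measuredSpectrum_nonneg _ hr)

/-- The increase `S(Δ(ρ)) - S(ρ)` of the entropy, in nats, under the dephasing `Δ` in the basis
formed by the columns of `V`. It equals the relative entropy of `ρ` and `Δ(ρ)`. -/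
def dephEntropyGain (V : unitaryGroup n ℂ) (ρ : Matrix n n ℂ) : ℝ :=
  (vnEntropy (dephIn V ρ) - vnEntropy ρ) * Real.log 2

lemma exists_classical_representation (V : unitaryGroup n ℂ) {ρ : Matrix n n ℂ}
    (hρ : ρ.PosSemidef) :
    ∃ P Q : n × n → ℝ, IsDominatedBy P Q ∧ ∑ x, P x = ρ.trace.re ∧
      relEntropy P Q = dephEntropyGain V ρ ∧
      ∀ t, 0 < t → ∃ X, IsSylvesterSolution ρ (dephIn V ρ) t X ∧
        sylvesterForm ρ (dephIn V ρ) t X = resolventSum P Q t := by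
  obtain ⟨U, r, hr, rfl⟩ := exists_eq_spectralMatrix hρ
  refine ⟨nussbaumSzkolaFst (star V * U) r, nussbaumSzkolaSnd (star V * U) r,
    isDominatedBy_nussbaumSzkola _ hr, ?_, ?_, fun t ht => ?_⟩
  · rw [sum_nussbaumSzkolaFst, trace_spectralMatrix, Complex.ofReal_re]
  · rw [relEntropy_nussbaumSzkola _ hr, dephEntropyGain, sub_mul, dephIn_spectralMatrix,
      vnEntropy_spectralMatrix, vnEntropy_spectralMatrix]
  · have hX := isSylvesterSolution_sylvesterSolution U V hr
      (measuredSpectrum_nonneg (star V * U) hr) ht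
    rw [dephIn_spectralMatrix]
    refine ⟨_, hX, ?_⟩
    rw [hX.sylvesterForm_eq hρ.1, trace_spectralMatrix_mul_sylvesterSolution,
      resolventSum_nussbaumSzkola, Complex.ofReal_re]

theorem exists_isSylvesterSolution_of_dephEntropyGain_eq {V : unitaryGroup n ℂ}
    {V' : unitaryGroup m ℂ} {ρ : Matrix n n ℂ} {ρ' : Matrix m m ℂ} (hρ : ρ.PosSemidef)
    (hρ' : ρ'.PosSemidef) (htr : ρ.trace = ρ'.trace) {Φ : Matrix m m ℂ → Matrix n n ℂ}
    (hΦ : ∀ t Y, sylvesterForm ρ (dephIn V ρ) t (Φ Y) = sylvesterForm ρ' (dephIn V' ρ') t Y)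
    (hgain : dephEntropyGain V ρ = dephEntropyGain V' ρ') {t : ℝ} (ht : 0 < t) :
    ∃ Y, IsSylvesterSolution ρ (dephIn V ρ) t (Φ Y) := by
  obtain ⟨P, Q, hPQ, hsum, hrel, hX⟩ := exists_classical_representation V hρ
  obtain ⟨P', Q', hPQ', hsum', hrel', hY⟩ := exists_classical_representation V' hρ'
  have hσ := posSemidef_dephIn V hρ
  have hle : ∀ t, 0 < t → resolventSum P' Q' t ≤ resolventSum P Q t := by
    intro t ht
    obtain ⟨X, hXsol, hXval⟩ := hX t ht
    obtain ⟨Y, -, hYval⟩ := hY t ht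
    rw [← hXval, ← hYval, ← hΦ]
    exact hXsol.sylvesterForm_le hρ hσ ht.le _
  have heq := resolventSum_eq_of_le_of_relEntropy_eq hPQ hPQ' hle
    (by rw [hsum, hsum', htr]) (by rw [hrel, hrel', hgain]) ht
  obtain ⟨X, hXsol, hXval⟩ := hX t ht
  obtain ⟨Y, -, hYval⟩ := hY t ht
  exact ⟨Y, hXsol.of_sylvesterForm_eq hρ hσ ht (by rw [hΦ, hYval, hXval, heq])⟩

end EntropyGain

section DirectSum

variable {A B : Type*} [DecidableEq A]

/-- The block `⟨i| ρ |j⟩` of a bipartite matrix. -/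
def block (ρ : Matrix (A × B) (A × B) ℂ) (i j : A) : Matrix B B ℂ :=
  of fun b b' => ρ (i, b) (j, b')

/-- The bipartite matrix `∑ᵢ |i⟩⟨i| ⊗ Mᵢ`. -/
def directSum (M : A → Matrix B B ℂ) : Matrix (A × B) (A × B) ℂ :=
  of fun p q => if p.1 = q.1 then M p.1 p.2 q.2 else 0

lemma dephA_eq_directSum (ρ : Matrix (A × B) (A × B) ℂ) :
    dephA ρ = directSum fun i => block ρ i i := by
  ext ⟨i, b⟩ ⟨j, b'⟩
  rcases eq_or_ne i j with rfl | hij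
  · simp [dephA, directSum, block]
  · simp [dephA, directSum, hij]

lemma star_directSum (M : A → Matrix B B ℂ) :
    star (directSum M) = directSum fun i => star (M i) := by
  ext ⟨i, b⟩ ⟨j, b'⟩
  rcases eq_or_ne i j with rfl | hij
  · simp [directSum]
  · simp [directSum, hij, hij.symm]

lemma directSum_diagonal [DecidableEq B] (d : A → B → ℂ) :
    directSum (fun i => diagonal (d i)) = diagonal fun p => d p.1 p.2 := by
  ext ⟨i, b⟩ ⟨j, b'⟩
  rcases eq_or_ne i j with rfl | hij
  · simp [directSum, diagonal_apply]
  · simp [directSum, hij]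

variable [Fintype A] [Fintype B]

lemma block_directSum_mul (M : A → Matrix B B ℂ) (ρ : Matrix (A × B) (A × B) ℂ) (i j : A) :
    block (directSum M * ρ) i j = M i * block ρ i j := by
  ext b b'
  simp [block, directSum, Matrix.mul_apply, Fintype.sum_prod_type, ite_mul]

lemma block_mul_directSum (ρ : Matrix (A × B) (A × B) ℂ) (M : A → Matrix B B ℂ) (i j : A) :
    block (ρ * directSum M) i j = block ρ i j * M j := by
  ext b b'
  simp [block, directSum, Matrix.mul_apply, Fintype.sum_prod_type, mul_ite]

lemma directSum_mul_directSum (M N : A → Matrix B B ℂ) :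
    directSum M * directSum N = directSum fun i => M i * N i := by
  ext ⟨i, b⟩ ⟨j, b'⟩
  rcases eq_or_ne i j with rfl | hij
  · simp [directSum, Matrix.mul_apply, Fintype.sum_prod_type]
  · simp [directSum, hij, Matrix.mul_apply, Fintype.sum_prod_type]

variable [DecidableEq B]

/-- The controlled unitary `∑ᵢ |i⟩⟨i| ⊗ Uᵢ`. -/
def controlledUnitary (U : A → unitaryGroup B ℂ) : unitaryGroup (A × B) ℂ :=
  ⟨directSum fun i => U i, mem_unitaryGroup_iff'.2 <| by
    simp only [star_directSum, directSum_mul_directSum, UnitaryGroup.star_mul_self]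
    exact (directSum_diagonal fun _ _ => 1)⟩

lemma directSum_spectralMatrix (U : A → unitaryGroup B ℂ) (d : A → B → ℝ) :
    directSum (fun i => spectralMatrix (U i) (d i)) =
      spectralMatrix (controlledUnitary U) fun p => d p.1 p.2 := by
  simp only [spectralMatrix, controlledUnitary, star_directSum, ← directSum_mul_directSum,
    directSum_diagonal fun i b => (d i b : ℂ)]

lemma dephIn_controlledUnitary {ρ : Matrix (A × B) (A × B) ℂ} {U : A → unitaryGroup B ℂ}
    {s : A → B → ℝ} (h : ∀ i, block ρ i i = spectralMatrix (U i) (s i)) :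
    dephIn (controlledUnitary U) ρ = dephA ρ := by
  set V := controlledUnitary U with hV
  have hblock : ∀ i, block (star (V : Matrix (A × B) (A × B) ℂ) * ρ * (V : Matrix _ _ ℂ)) i i =
      diagonal fun b => (s i b : ℂ) := by
    intro i
    rw [hV, controlledUnitary, star_directSum, block_mul_directSum, block_directSum_mul, h,
      star_mul_spectralMatrix_mul]
    simp [spectralMatrix]
  have hdeph : deph (star (V : Matrix (A × B) (A × B) ℂ) * ρ * (V : Matrix _ _ ℂ)) =
      diagonal fun p => (s p.1 p.2 : ℂ) := by
    rw [deph_eq_diagonal]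
    refine congrArg diagonal (funext fun p => ?_)
    rw [← diagonal_apply_eq (fun b => (s p.1 b : ℂ)) p.2, ← hblock]
    rfl
  rw [dephIn, hdeph, dephA_eq_directSum, funext h, directSum_spectralMatrix, spectralMatrix]

lemma vnEntropy_directSum {M : A → Matrix B B ℂ} (hM : ∀ i, (M i).IsHermitian) :
    vnEntropy (directSum M) = ∑ i, vnEntropy (M i) := by
  have hlog : Real.log 2 ≠ 0 := (Real.log_pos one_lt_two).ne'
  rw [← mul_left_inj' hlog, Finset.sum_mul, funext fun i => eq_spectralMatrix_eigenvalues (hM i),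
    directSum_spectralMatrix]
  simp only [vnEntropy_spectralMatrix, Fintype.sum_prod_type]

end DirectSum

section Bipartite

variable {A B : Type*}

lemma posSemidef_block {ρ : Matrix (A × B) (A × B) ℂ} (hρ : ρ.PosSemidef) (i : A) :
    (block ρ i i).PosSemidef :=
  hρ.submatrix (Prod.mk i)

variable [Fintype B]

lemma trace_block_self {ρ : Matrix (A × B) (A × B) ℂ} (hρ : ρ.PosSemidef) (i : A) :
    (block ρ i i).trace = probA ρ i :=
  (Complex.conj_eq_iff_re.1 <| by
    rw [← RCLike.star_def, ← trace_conjTranspose, (posSemidef_block hρ i).1.eq]).symm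

lemma condB_eq_smul_block (ρ : Matrix (A × B) (A × B) ℂ) (i : A) :
    condB ρ i = (probA ρ i)⁻¹ • block ρ i i := by
  rw [← Complex.coe_smul, Complex.ofReal_inv]
  rfl

lemma isHermitian_condB {ρ : Matrix (A × B) (A × B) ℂ} (hρ : ρ.PosSemidef) (i : A) :
    (condB ρ i).IsHermitian := by
  rw [condB_eq_smul_block]
  exact (posSemidef_block hρ i).1.smul (IsSelfAdjoint.all _)

lemma block_self_eq_probA_smul_condB {ρ : Matrix (A × B) (A × B) ℂ} (hρ : ρ.PosSemidef) (i : A) :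
    block ρ i i = probA ρ i • condB ρ i := by
  rcases eq_or_ne (probA ρ i) 0 with hi | hi
  · rw [hi, zero_smul, ← (posSemidef_block hρ i).trace_eq_zero_iff, trace_block_self hρ, hi,
      Complex.ofReal_zero]
  · rw [condB_eq_smul_block, smul_inv_smul₀ hi]

lemma trace_condB {ρ : Matrix (A × B) (A × B) ℂ} (hρ : ρ.PosSemidef) {i : A}
    (hi : probA ρ i ≠ 0) : (condB ρ i).trace = 1 := by
  rw [condB_eq_smul_block, trace_smul, trace_block_self hρ, Complex.real_smul,
    Complex.ofReal_inv, inv_mul_cancel₀ (Complex.ofReal_ne_zero.2 hi)]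

lemma posSemidef_ptrB {ρ : Matrix (A × B) (A × B) ℂ} (hρ : ρ.PosSemidef) :
    (ptrB ρ).PosSemidef := by
  have hsum : ptrB ρ = ∑ b, ρ.submatrix (fun a => (a, b)) (fun a => (a, b)) := by
    ext a a'
    simp [ptrB, Matrix.sum_apply]
  rw [hsum]
  exact posSemidef_sum _ fun b _ => hρ.submatrix _

lemma ptrB_dephA [DecidableEq A] (ρ : Matrix (A × B) (A × B) ℂ) :
    ptrB (dephA ρ) = deph (ptrB ρ) := by
  ext i j
  rcases eq_or_ne i j with rfl | hij
  · simp [ptrB, dephA, deph]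
  · simp [ptrB, dephA, deph, hij]

variable [Fintype A]

lemma trace_ptrB (ρ : Matrix (A × B) (A × B) ℂ) : (ptrB ρ).trace = ρ.trace := by
  simp [ptrB, trace, Fintype.sum_prod_type]

lemma vnEntropy_deph_ptrB [DecidableEq A] {ρ : Matrix (A × B) (A × B) ℂ} (hρ : ρ.PosSemidef) :
    vnEntropy (deph (ptrB ρ)) * Real.log 2 = ∑ i, Real.negMulLog (probA ρ i) := by
  rw [deph_eq_diagonal, ← vnEntropy_diagonal]
  congr
  exact funext fun i => trace_block_self hρ i

variable [DecidableEq B]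

lemma trace_mul_kronecker_one (ρ : Matrix (A × B) (A × B) ℂ) (Y : Matrix A A ℂ) :
    (ρ * (Y ⊗ₖ 1)).trace = (ptrB ρ * Y).trace := by
  simp only [trace, diag_apply, Matrix.mul_apply, kroneckerMap_apply, Fintype.sum_prod_type, ptrB,
    of_apply, one_apply, mul_ite, mul_one, mul_zero, Finset.sum_ite_eq', Finset.mem_univ, if_true,
    Finset.sum_mul]
  exact Finset.sum_congr rfl fun i _ => Finset.sum_comm

variable [DecidableEq A]

lemma sylvesterForm_kronecker_one (ρ : Matrix (A × B) (A × B) ℂ) (t : ℝ) (Y : Matrix A A ℂ) :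
    sylvesterForm ρ (dephA ρ) t (Y ⊗ₖ 1) = sylvesterForm (ptrB ρ) (deph (ptrB ρ)) t Y := by
  simp only [sylvesterForm, conjTranspose_kronecker, conjTranspose_one, ← mul_kronecker_mul,
    Matrix.one_mul, trace_mul_kronecker_one, ptrB_dephA]

lemma vnEntropy_dephA {ρ : Matrix (A × B) (A × B) ℂ} (hρ : ρ.PosSemidef) :
    vnEntropy (dephA ρ) = ∑ i, probA ρ i * vnEntropy (condB ρ i) + vnEntropy (deph (ptrB ρ)) := by
  have hlog : Real.log 2 ≠ 0 := (Real.log_pos one_lt_two).ne'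
  rw [← mul_left_inj' hlog, add_mul, vnEntropy_deph_ptrB hρ, dephA_eq_directSum,
    vnEntropy_directSum fun i => (posSemidef_block hρ i).1, Finset.sum_mul, Finset.sum_mul,
    ← Finset.sum_add_distrib]
  refine Finset.sum_congr rfl fun i _ => ?_
  rw [block_self_eq_probA_smul_condB hρ, vnEntropy_smul (isHermitian_condB hρ i), mul_assoc]
  rcases eq_or_ne (probA ρ i) 0 with hp | hp
  · simp [hp]
  · rw [trace_condB hρ hp, Complex.one_re, mul_one]

theorem exists_isSylvesterSolution_dephA_of_QDI_eq_zero {ρ : Matrix (A × B) (A × B) ℂ}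
    (hρ : ρ.PosSemidef) (hD : QDI ρ = 0) :
    ∃ Y : Matrix A A ℂ, IsSylvesterSolution ρ (dephA ρ) 1 (Y ⊗ₖ 1) := by
  choose U s _ hblock using fun i => exists_eq_spectralMatrix (posSemidef_block hρ i)
  have hdeph := dephIn_controlledUnitary hblock
  have hgain : dephEntropyGain (controlledUnitary U) ρ = dephEntropyGain 1 (ptrB ρ) := by
    rw [QDI] at hD
    rw [dephEntropyGain, dephEntropyGain, hdeph, dephIn_one, vnEntropy_dephA hρ]
    linear_combination Real.log 2 * hD
  rw [← hdeph]
  refine exists_isSylvesterSolution_of_dephEntropyGain_eq hρ (posSemidef_ptrB hρ)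
    (trace_ptrB ρ).symm (fun t Y => ?_) hgain one_pos
  rw [hdeph, dephIn_one, sylvesterForm_kronecker_one]

end Bipartite

section Blocks

variable {A B : Type*} {ρ : Matrix (A × B) (A × B) ℂ}

lemma conjTranspose_block (hρ : ρ.IsHermitian) (i j : A) : (block ρ i j)ᴴ = block ρ j i := by
  ext b b'
  exact hρ.apply (j, b) (i, b')

lemma dephA_eq_self_of_block_eq_zero [DecidableEq A] (h : ∀ i j, i ≠ j → block ρ i j = 0) :
    dephA ρ = ρ := by
  ext ⟨i, b⟩ ⟨j, b'⟩
  rcases eq_or_ne i j with rfl | hij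
  · simp [dephA]
  · rw [dephA, of_apply, if_neg hij]
    exact (congrFun₂ (h i j hij) b b').symm

lemma eq_kronecker_of_block_eq_smul {M : Matrix A A ℂ} {ω : Matrix B B ℂ}
    (h : ∀ i j, block ρ i j = M i j • ω) : ρ = M ⊗ₖ ω := by
  ext ⟨i, b⟩ ⟨j, b'⟩
  exact congrFun₂ (h i j) b b'

lemma block_eq_zero_of_block_self_eq_zero [Finite A] [Finite B] (hρ : ρ.PosSemidef)
    {i : A} (hi : block ρ i i = 0) (j : A) : block ρ j i = 0 := by
  classical
  have := Fintype.ofFinite A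
  have := Fintype.ofFinite B
  let H : Matrix (A × B) B ℂ := (1 : Matrix (A × B) (A × B) ℂ).submatrix id (Prod.mk i)
  have hρH : ρ * H = ρ.submatrix id (Prod.mk i) := mul_submatrix_one (Equiv.refl _) _ ρ
  have hH : Hᴴ * ρ * H = block ρ i i := by
    rw [Matrix.mul_assoc, hρH, conjTranspose_submatrix, conjTranspose_one]
    exact one_submatrix_mul _ (Equiv.refl _) _
  have hzero := mul_eq_zero_of_conjTranspose_mul_mul_eq_zero hρ (hH.trans hi)
  rw [hρH] at hzero
  ext b b'
  exact congrFun₂ hzero (j, b) b'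

lemma ptrB_kronecker [Fintype B] (M : Matrix A A ℂ) (ω : Matrix B B ℂ) :
    ptrB (M ⊗ₖ ω) = ω.trace • M := by
  ext i j
  simp [ptrB, trace, ← Finset.mul_sum, mul_comm]

lemma ptrA_kronecker [Fintype A] (M : Matrix A A ℂ) (ω : Matrix B B ℂ) :
    ptrA (M ⊗ₖ ω) = M.trace • ω := by
  ext b b'
  simp [ptrA, trace, ← Finset.sum_mul]

variable [Fintype A] [Fintype B]

lemma kronecker_eq_ptrB_kronecker_ptrA {M : Matrix A A ℂ} {ω : Matrix B B ℂ}
    (h : (M ⊗ₖ ω).trace = 1) : M ⊗ₖ ω = ptrB (M ⊗ₖ ω) ⊗ₖ ptrA (M ⊗ₖ ω) := by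
  rw [trace_kronecker] at h
  rw [ptrB_kronecker, ptrA_kronecker, smul_kronecker, kronecker_smul, smul_smul, mul_comm, h,
    one_smul]

variable [DecidableEq A] [DecidableEq B]

lemma IsSylvesterSolution.block_eq {Y : Matrix A A ℂ}
    (h : IsSylvesterSolution ρ (dephA ρ) 1 (Y ⊗ₖ 1)) (i j : A) :
    Y i j • block ρ i i + ∑ k, Y i k • block ρ k j = block ρ i j := by
  have hone : block (Y ⊗ₖ (1 : Matrix B B ℂ)) i j = Y i j • 1 := rfl
  have hleft : block (dephA ρ * (Y ⊗ₖ 1)) i j = Y i j • block ρ i i := by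
    rw [dephA_eq_directSum, block_directSum_mul, hone, Matrix.mul_smul, Matrix.mul_one]
  have hright : block ((Y ⊗ₖ 1) * ρ) i j = ∑ k, Y i k • block ρ k j := by
    ext b b'
    simp [block, Matrix.mul_apply, Fintype.sum_prod_type, Matrix.sum_apply, one_apply]
  rw [← hleft, ← hright]
  rw [IsSylvesterSolution, one_smul] at h
  exact congrArg (fun M => block M i j) h

end Blocks

section Qubit

variable {B : Type*} [Fintype B] [DecidableEq B] {ρ : Matrix (Fin 2 × B) (Fin 2 × B) ℂ}

lemma exists_block_eq_smul_block_self (hρ : ρ.PosSemidef) {Y : Matrix (Fin 2) (Fin 2) ℂ}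
    (h : IsSylvesterSolution ρ (dephA ρ) 1 (Y ⊗ₖ 1)) {i j : Fin 2} (hij : i ≠ j) :
    ∃ c : ℂ, block ρ j i = c • block ρ i i := by
  have huniv : Finset.univ = {i, j} :=
    (Finset.eq_univ_of_card _ (Finset.card_pair hij)).symm
  have hii := h.block_eq i i
  have hoff := h.block_eq i j
  rw [huniv, Finset.sum_pair hij] at hii hoff
  by_cases hY : Y i j = 0
  · rw [hY] at hii hoff
    have hprod : (2 * Y i i - 1) • block ρ i i = 0 := by
      linear_combination (norm := module) hii
    refine ⟨0, ?_⟩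
    rw [zero_smul]
    rcases smul_eq_zero.1 hprod with hhalf | hzero
    · have hYii : Y i i = 1 / 2 := by linear_combination hhalf / 2
      rw [hYii] at hoff
      rw [← conjTranspose_block hρ.1, conjTranspose_eq_zero]
      linear_combination (norm := module) (-2 : ℂ) • hoff
    · exact block_eq_zero_of_block_self_eq_zero hρ hzero j
  · refine ⟨(Y i j)⁻¹ * (1 - 2 * Y i i), ?_⟩
    rw [mul_smul, eq_inv_smul_iff₀ hY]
    linear_combination (norm := module) hii

theorem dephA_eq_self_or_exists_eq_kronecker (hρ : ρ.PosSemidef) {Y : Matrix (Fin 2) (Fin 2) ℂ}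
    (h : IsSylvesterSolution ρ (dephA ρ) 1 (Y ⊗ₖ 1)) :
    dephA ρ = ρ ∨ ∃ (M : Matrix (Fin 2) (Fin 2) ℂ) (ω : Matrix B B ℂ), ρ = M ⊗ₖ ω := by
  obtain ⟨c, hc⟩ := exists_block_eq_smul_block_self hρ h zero_ne_one
  obtain ⟨d, hd⟩ := exists_block_eq_smul_block_self hρ h one_ne_zero
  have hadj : block ρ 0 1 = star c • block ρ 0 0 := by
    rw [← conjTranspose_block hρ.1, hc, conjTranspose_smul, conjTranspose_block hρ.1]
  rcases eq_or_ne d 0 with rfl | hd0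
  · rw [zero_smul] at hd
    left
    have h10 : block ρ 1 0 = 0 := by rw [← conjTranspose_block hρ.1, hd, conjTranspose_zero]
    refine dephA_eq_self_of_block_eq_zero fun i j hij => ?_
    fin_cases i <;> fin_cases j <;> first | exact absurd rfl hij | assumption
  · right
    have h11 : block ρ 1 1 = (d⁻¹ * star c) • block ρ 0 0 := by
      rw [mul_smul, ← hadj, hd, inv_smul_smul₀ hd0]
    refine ⟨!![1, star c; c, d⁻¹ * star c], block ρ 0 0, eq_kronecker_of_block_eq_smul ?_⟩
    simp [Fin.forall_fin_two, hadj, hc, h11]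

end Qubit

theorem stmt17_general {B : Type*} [Fintype B] [DecidableEq B]
    (ρ : Matrix (Fin 2 × B) (Fin 2 × B) ℂ) (hρ : IsDensityMatrix ρ) (hD : QDI ρ = 0) :
    dephA ρ = ρ ∨ ρ = (ptrB ρ) ⊗ₖ (ptrA ρ) := by
  obtain ⟨hpos, htr⟩ := hρ
  obtain ⟨Y, hY⟩ := exists_isSylvesterSolution_dephA_of_QDI_eq_zero hpos hD
  refine (dephA_eq_self_or_exists_eq_kronecker hpos hY).imp_right ?_
  rintro ⟨M, ω, rfl⟩
  exact kronecker_eq_ptrB_kronecker_ptrA htr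

/-- if the measured system `A` is a qubit and `D_{B|A}(ρ_AB) = 0`, then
`ρ_AB` is either an incoherent-quantum state (`(Δ_A⊗id)ρ = ρ`) or a product state. -/
theorem stmt17 {dB : ℕ} (ρ : Matrix (Fin 2 × Fin dB) (Fin 2 × Fin dB) ℂ)
    (hρ : IsDensityMatrix ρ) (hD : QDI ρ = 0) :
    dephA ρ = ρ ∨ ρ = (ptrB ρ) ⊗ₖ (ptrA ρ) :=
  stmt17_general ρ hρ hD
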